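/- Let X be a metric space and let Y be a subset of a σ-compact zero-dimensional subset of X. Then player TWO has a winning strategy in the game G^ω_d(𝒪,𝒪_Y) on X. -/

import Mathlib

/-!
Since TWO has infinitely many innings, it is enough to cover one compact piece `K n` of the
`σ`-compact set in the `n`-th inning, whatever happened before. The piece `K n` is compact and
zero-dimensional, so ONE's cover splits it into finitely many disjoint clopen, hence compact, parts,
each inside one member of the cover. By regularity of the ambient space, these parts have open
neighbourhoods inside the same members whose closures are still disjoint, and a finite family with
pairwise disjoint closures is discrete.
-/

namespace SSG

/-- A family of subsets of a topological space is *discrete* if every point has a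
neighborhood meeting at most one member of the family. -/
def IsDiscreteFam {X : Type*} [TopologicalSpace X] (𝒜 : Set (Set X)) : Prop :=
  ∀ x : X, ∃ U ∈ nhds x, {A | A ∈ 𝒜 ∧ (A ∩ U).Nonempty}.Subsingleton

/-- A family of open subsets covering the whole space. -/
def IsOpenCover {X : Type*} [TopologicalSpace X] (𝒰 : Set (Set X)) : Prop :=
  (∀ U ∈ 𝒰, IsOpen U) ∧ ⋃₀ 𝒰 = Set.univ

/-- A legal move of TWO in the selective strong screenability game, in response to the
open cover `𝒰` played by ONE: a discrete family of open sets, each contained in some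
member of `𝒰`. -/
def LegalTwoMove {X : Type*} [TopologicalSpace X] (𝒰 𝒱 : Set (Set X)) : Prop :=
  IsDiscreteFam 𝒱 ∧ ∀ V ∈ 𝒱, IsOpen V ∧ ∃ U ∈ 𝒰, V ⊆ U

/-- ONE has a winning strategy in the game `G^ω_d(𝒪, 𝒪_Y)` on `X`:
there is a strategy `σ` (a function from finite histories of TWO's moves to open covers)
such that for every play in which TWO moves legally, the union of TWO's families fails
to cover `Y`. -/
def OneWinsGomega (X : Type*) [TopologicalSpace X] (Y : Set X) : Prop :=
  ∃ σ : List (Set (Set X)) → Set (Set X),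
    (∀ h : List (Set (Set X)), IsOpenCover (σ h)) ∧
    ∀ V : ℕ → Set (Set X),
      (∀ n : ℕ, LegalTwoMove (σ (List.ofFn fun i : Fin n => V i)) (V n)) →
      ¬ Y ⊆ ⋃ n : ℕ, ⋃₀ V n

/-- TWO has a winning strategy in the game `G^ω_d(𝒪, 𝒪_Y)` on `X`:
a strategy `τ` (from finite histories of ONE's moves, including the current inning's move,
to TWO's responses) such that against any sequence of open covers played by ONE, all of
TWO's responses are legal and their union covers `Y`. -/
def TwoWinsGomega (X : Type*) [TopologicalSpace X] (Y : Set X) : Prop :=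
  ∃ τ : List (Set (Set X)) → Set (Set X),
    ∀ U : ℕ → Set (Set X), (∀ n : ℕ, IsOpenCover (U n)) →
      (∀ n : ℕ, LegalTwoMove (U n) (τ (List.ofFn fun i : Fin (n+1) => U i))) ∧
      Y ⊆ ⋃ n : ℕ, ⋃₀ τ (List.ofFn fun i : Fin (n+1) => U i)

/-- TWO has a winning strategy in the one-inning game `G^1_d(𝒪, 𝒪_Y)` on `X`:
every open cover of `X` admits a discrete family of open sets, each contained in some
member of the cover, whose union contains `Y`. -/
def TwoWinsGone (X : Type*) [TopologicalSpace X] (Y : Set X) : Prop :=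
  ∀ 𝒰 : Set (Set X), IsOpenCover 𝒰 →
    ∃ 𝒱 : Set (Set X), LegalTwoMove 𝒰 𝒱 ∧ Y ⊆ ⋃₀ 𝒱

/-- ONE has a winning strategy in the Banach–Mazur game `MB(Y,X)`: a strategy `σ`
(from finite histories of TWO's moves to ONE's next move) which always produces a legal
move (a nonempty open set contained in TWO's last move) whenever TWO has moved legally
so far, and such that for every play in which TWO moves legally,
`Y ∩ ⋂ₙ Oₙ` is nonempty. -/
def OneWinsMB (X : Type*) [TopologicalSpace X] (Y : Set X) : Prop :=
  ∃ σ : List (Set X) → Set X,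
    (∀ T : ℕ → Set X, ∀ n : ℕ,
      (∀ k : ℕ, k < n → IsOpen (T k) ∧ (T k).Nonempty ∧
          T k ⊆ σ (List.ofFn fun i : Fin k => T i)) →
      IsOpen (σ (List.ofFn fun i : Fin n => T i)) ∧
      (σ (List.ofFn fun i : Fin n => T i)).Nonempty ∧
      ∀ k : ℕ, n = k + 1 → σ (List.ofFn fun i : Fin n => T i) ⊆ T k) ∧
    ∀ T : ℕ → Set X,
      (∀ n : ℕ, IsOpen (T n) ∧ (T n).Nonempty ∧
          T n ⊆ σ (List.ofFn fun i : Fin n => T i)) →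
      (Y ∩ ⋂ n : ℕ, σ (List.ofFn fun i : Fin n => T i)).Nonempty

/-- TWO has a winning strategy in the Banach–Mazur game `MB(Y,X)`: a strategy `τ`
(from finite histories of ONE's moves to TWO's next move) which always produces a legal
move (a nonempty open subset of ONE's last move) whenever ONE has moved legally
so far, and such that for every play in which ONE moves legally,
`Y ∩ ⋂ₙ Oₙ` is empty. -/
def TwoWinsMB (X : Type*) [TopologicalSpace X] (Y : Set X) : Prop :=
  ∃ τ : List (Set X) → Set X,
    (∀ O : ℕ → Set X, ∀ n : ℕ,
      (∀ k : ℕ, k ≤ n → IsOpen (O k) ∧ (O k).Nonempty ∧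
          ∀ j : ℕ, k = j + 1 → O k ⊆ τ (List.ofFn fun i : Fin (j+1) => O i)) →
      IsOpen (τ (List.ofFn fun i : Fin (n+1) => O i)) ∧
      (τ (List.ofFn fun i : Fin (n+1) => O i)).Nonempty ∧
      τ (List.ofFn fun i : Fin (n+1) => O i) ⊆ O n) ∧
    ∀ O : ℕ → Set X,
      (∀ n : ℕ, IsOpen (O n) ∧ (O n).Nonempty ∧
          ∀ j : ℕ, n = j + 1 → O n ⊆ τ (List.ofFn fun i : Fin (j+1) => O i)) →
      Y ∩ ⋂ n : ℕ, O n = ∅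

/-- A space is ultraparacompact if every open cover has a refinement by pairwise
disjoint open sets still covering the space. -/
def Ultraparacompact (X : Type*) [TopologicalSpace X] : Prop :=
  ∀ 𝒰 : Set (Set X), IsOpenCover 𝒰 →
    ∃ 𝒱 : Set (Set X), (∀ V ∈ 𝒱, IsOpen V ∧ ∃ U ∈ 𝒰, V ⊆ U) ∧
      𝒱.Pairwise Disjoint ∧ ⋃₀ 𝒱 = Set.univ

/-- A space is zero-dimensional if every point has a neighborhood basis of clopen sets. -/
def ZeroDimensional (X : Type*) [TopologicalSpace X] : Prop :=
  ∀ (x : X) (U : Set X), IsOpen U → x ∈ U → ∃ V : Set X, IsClopen V ∧ x ∈ V ∧ V ⊆ U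

/-- A space is strongly zero-dimensional if every *finite* open cover has a refinement
by pairwise disjoint open sets still covering the space. -/
def StronglyZeroDim (X : Type*) [TopologicalSpace X] : Prop :=
  ∀ 𝒰 : Set (Set X), 𝒰.Finite → IsOpenCover 𝒰 →
    ∃ 𝒱 : Set (Set X), (∀ V ∈ 𝒱, IsOpen V ∧ ∃ U ∈ 𝒰, V ⊆ U) ∧
      𝒱.Pairwise Disjoint ∧ ⋃₀ 𝒱 = Set.univ

/-- `X` has a π-base consisting of nontrivial connected (open) sets. -/
def HasConnectedPiBase (X : Type*) [TopologicalSpace X] : Prop :=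
  ∃ P : Set (Set X), (∀ B ∈ P, IsOpen B ∧ IsConnected B ∧ B.Nontrivial) ∧
    ∀ U : Set X, IsOpen U → U.Nonempty → ∃ B ∈ P, B ⊆ U

open Set Topology

open TopologicalSpace (Clopens)

open scoped Function

section ZeroDimensional

variable {A B : Type*} [TopologicalSpace A] [TopologicalSpace B]

theorem IsOpenCover.image_preimage {f : A → B} (hf : Continuous f) {𝒰 : Set (Set B)}
    (h𝒰 : IsOpenCover 𝒰) : IsOpenCover (preimage f '' 𝒰) := by
  refine ⟨forall_mem_image.2 fun U hU => (h𝒰.1 U hU).preimage hf, ?_⟩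
  rw [sUnion_image, ← preimage_iUnion₂, ← sUnion_eq_biUnion, h𝒰.2, preimage_univ]

theorem ZeroDimensional.of_isInducing {f : A → B} (hB : ZeroDimensional B) (hf : IsInducing f) :
    ZeroDimensional A := by
  intro a U hU haU
  obtain ⟨U', hU', rfl⟩ := hf.isOpen_iff.1 hU
  obtain ⟨V, hV, haV, hVU⟩ := hB (f a) U' hU' haU
  exact ⟨f ⁻¹' V, hV.preimage hf.continuous, haV, preimage_mono hVU⟩

theorem ZeroDimensional.exists_finite_isClopen_refinement [CompactSpace A] (hA : ZeroDimensional A)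
    {𝒰 : Set (Set A)} (h𝒰 : IsOpenCover 𝒰) :
    ∃ 𝒱 : Set (Set A), 𝒱.Finite ∧ (∀ V ∈ 𝒱, IsClopen V ∧ ∃ U ∈ 𝒰, V ⊆ U) ∧
      𝒱.Pairwise Disjoint ∧ ⋃₀ 𝒱 = univ := by
  have exists_clopen (a : A) : ∃ V : Clopens A, a ∈ V ∧ ∃ U ∈ 𝒰, (V : Set A) ⊆ U := by
    obtain ⟨U, hU, haU⟩ : a ∈ ⋃₀ 𝒰 := h𝒰.2 ▸ mem_univ a
    obtain ⟨V, hV, haV, hVU⟩ := hA a U (h𝒰.1 U hU) haU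
    exact ⟨⟨V, hV⟩, haV, U, hU, hVU⟩
  choose V haV U hU hVU using exists_clopen
  obtain ⟨t, ht⟩ := isCompact_univ.elim_finite_subcover (fun a => (V a : Set A))
    (fun a => (V a).isOpen) fun a _ => mem_iUnion_of_mem a (haV a)
  obtain ⟨W, hWV, hW, hWd⟩ := Fintype.exists_disjointed_le fun a : t => V a
  refine ⟨range fun a => (W a : Set A), finite_range _, ?_, ?_, ?_⟩
  · rintro _ ⟨a, rfl⟩
    exact ⟨(W a).isClopen, U a, hU a, (SetLike.coe_subset_coe.2 (hWV a)).trans (hVU a)⟩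
  · rintro _ ⟨a, rfl⟩ _ ⟨b, rfl⟩ hab
    exact Clopens.coe_disjoint.2 (hWd fun h => hab (h ▸ rfl))
  · rw [sUnion_range, ← univ_subset_iff]
    have hWV_iUnion : ⋃ a, (W a : Set A) = ⋃ a : t, (V a : Set A) := by
      simpa only [Clopens.coe_finset_sup, Finset.mem_univ, iUnion_true] using
        congrArg (fun C : Clopens A => (C : Set A)) hW
    rwa [hWV_iUnion, iUnion_subtype]

end ZeroDimensional

section Expansion

variable {X A ι : Type*} [TopologicalSpace X] [TopologicalSpace A]

theorem isDiscreteFam_range_of_locallyFinite {V : ι → Set X} (hV : LocallyFinite V)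
    (hd : Pairwise (Disjoint on fun i => closure (V i))) : IsDiscreteFam (range V) := by
  intro x
  refine ⟨_, hV.closure.eventually_subset (fun _ => isClosed_closure) x, ?_⟩
  rintro _ ⟨⟨i, rfl⟩, y, hyi, hy⟩ _ ⟨⟨j, rfl⟩, z, hzj, hz⟩
  have hxi : x ∈ closure (V i) := hy (subset_closure hyi)
  have hxj : x ∈ closure (V j) := hz (subset_closure hzj)
  rw [hd.eq (not_disjoint_iff.2 ⟨x, hxi, hxj⟩)]

theorem separatedNhds_image_of_isInducing [R1Space X] {f : A → X} (hf : IsInducing f) {V W : Set A}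
    (hV : IsOpen V) (hVc : IsCompact V) (hWc : IsCompact W) (hd : Disjoint V W) :
    SeparatedNhds (f '' V) (f '' W) := by
  simp_rw [separatedNhds_iff_disjoint, (hVc.image hf.continuous).disjoint_nhdsSet_left,
    (hWc.image hf.continuous).disjoint_nhdsSet_right, disjoint_nhds_nhds_iff_not_inseparable]
  rintro _ ⟨v, hv, rfl⟩ _ ⟨w, hw, rfl⟩ hvw
  exact hd.notMem_of_mem_left (((hf.inseparable_iff.1 hvw).mem_open_iff hV).1 hv) hw

theorem exists_isOpen_pairwise_disjoint_closure [RegularSpace X] [Finite ι] {K U : ι → Set X}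
    (hK : ∀ i, IsCompact (K i)) (hU : ∀ i, IsOpen (U i)) (hKU : ∀ i, K i ⊆ U i)
    (hd : Pairwise (SeparatedNhds on K)) :
    ∃ V : ι → Set X, (∀ i, IsOpen (V i) ∧ K i ⊆ V i ∧ V i ⊆ U i) ∧
      Pairwise (Disjoint on fun i => closure (V i)) := by
  obtain ⟨N, hN, hNd⟩ := Pairwise.exists_mem_filter_of_disjoint (l := fun i => 𝓝ˢ (K i))
    fun i j hij => (hd hij).disjoint_nhdsSet
  choose V hVo hKV hVNU using fun i => (hK i).exists_isOpen_closure_subset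
    (Filter.inter_mem (hN i) ((hU i).mem_nhdsSet.2 (hKU i)))
  exact ⟨V, fun i => ⟨hVo i, hKV i, subset_closure.trans ((hVNU i).trans inter_subset_right)⟩,
    fun i j hij => (hNd hij).mono ((hVNU i).trans inter_subset_left)
      ((hVNU j).trans inter_subset_left)⟩

end Expansion

section Game

variable {X : Type*} [TopologicalSpace X]

theorem twoWinsGone_of_isCompact_of_zeroDimensional [RegularSpace X] {K : Set X}
    (hK : IsCompact K) (hzd : ZeroDimensional K) : TwoWinsGone X K := by
  intro 𝒰 h𝒰
  have : CompactSpace K := isCompact_iff_compactSpace.1 hK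
  obtain ⟨𝒦, hfin, h𝒦, hd, hcover⟩ :=
    hzd.exists_finite_isClopen_refinement (h𝒰.image_preimage continuous_subtype_val)
  have : Finite 𝒦 := hfin
  have hcompact (P : 𝒦) : IsCompact (P : Set K) := (h𝒦 P P.2).1.isClosed.isCompact
  have exists_mem_cover (P : 𝒦) : ∃ U ∈ 𝒰, Subtype.val '' (P : Set K) ⊆ U := by
    obtain ⟨-, _, ⟨U, hU, rfl⟩, hPU⟩ := h𝒦 P P.2
    exact ⟨U, hU, image_subset_iff.2 hPU⟩
  choose U hU hPU using exists_mem_cover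
  obtain ⟨V, hV, hVd⟩ := exists_isOpen_pairwise_disjoint_closure
    (fun P => (hcompact P).image continuous_subtype_val) (fun P => h𝒰.1 _ (hU P)) hPU
    fun P Q hPQ => separatedNhds_image_of_isInducing .subtypeVal (h𝒦 P P.2).1.isOpen
      (hcompact P) (hcompact Q) (hd P.2 Q.2 (Subtype.coe_ne_coe.2 hPQ))
  refine ⟨range V, ⟨isDiscreteFam_range_of_locallyFinite (locallyFinite_of_finite V) hVd,
    forall_mem_range.2 fun P => ⟨(hV P).1, U P, hU P, (hV P).2.2⟩⟩, fun x hx => ?_⟩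
  obtain ⟨P, hP, hxP⟩ : (⟨x, hx⟩ : K) ∈ ⋃₀ 𝒦 := hcover ▸ mem_univ _
  exact ⟨V ⟨P, hP⟩, mem_range_self _, (hV ⟨P, hP⟩).2.1 (mem_image_of_mem _ hxP)⟩

theorem twoWinsGomega_of_forall_twoWinsGone {Y : Set X} {K : ℕ → Set X}
    (hK : ∀ n, TwoWinsGone X (K n)) (hY : Y ⊆ ⋃ n, K n) : TwoWinsGomega X Y := by
  choose! reply hlegal hcover using hK
  refine ⟨fun history => reply (history.length - 1) (history.getLastD ∅), fun U hU => ?_⟩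
  have getLastD_history (n : ℕ) : (List.ofFn fun i : Fin (n + 1) => U i).getLastD ∅ = U n := by
    rw [List.ofFn_succ', List.concat_eq_append, List.getLastD_concat]; rfl
  simp only [List.length_ofFn, Nat.add_sub_cancel, getLastD_history]
  exact ⟨fun n => hlegal n (U n) (hU n), hY.trans (iUnion_mono fun n => hcover n (U n) (hU n))⟩

theorem statement10_general [RegularSpace X] {Y : Set X} {K : ℕ → Set X}
    (hK : ∀ n, IsCompact (K n)) (hzd : ∀ n, ZeroDimensional (K n)) (hY : Y ⊆ ⋃ n, K n) :
    TwoWinsGomega X Y :=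
  twoWinsGomega_of_forall_twoWinsGone
    (fun n => twoWinsGone_of_isCompact_of_zeroDimensional (hK n) (hzd n)) hY

end Game

/-- If `X` is a metric space and `Y` is a subset of a σ-compact
zero-dimensional subset `C` of `X`, then TWO has a winning strategy in `G^ω_d(𝒪,𝒪_Y)`. -/
theorem statement10 {X : Type*} [MetricSpace X] (Y C : Set X) (hYC : Y ⊆ C)
    (hσcompact : ∃ K : ℕ → Set X, (∀ n, IsCompact (K n)) ∧ C = ⋃ n, K n)
    (hzd : ZeroDimensional ↥C) :
    TwoWinsGomega X Y := by
  obtain ⟨K, hK, rfl⟩ := hσcompact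
  exact statement10_general hK
    (fun n => hzd.of_isInducing (IsEmbedding.inclusion (subset_iUnion K n)).isInducing) hYC

end SSG
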